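/- arXiv:1705.06838 — 2 statements merged into one kernel-verified Lean document; each statement's English description precedes it below -/
import Mathlib

section
/- Let k, p ≥ 2 and let S ⊆ T(k) be a full and decreasing family of reflexive functions. Then there exist a set E ⊆ A ⊆ N with |E| = p and a function f ∈ S with domain A^k such that f is regressively regular over E; in particular, f has at most k^k regressive values on E^k ⊆ domain(f). -/
open scoped Classical

/-- The maximum coordinate of a `k`-tuple of nonnegative integers. -/
def maxv {k : ℕ} (z : Fin k → ℕ) : ℕ := Finset.univ.sup z

/-- The minimum coordinate of a `k`-tuple of nonnegative integers. -/
noncomputable def minv {k : ℕ} (z : Fin k → ℕ) : ℕ := sInf (Set.range z)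

/-- A directed graph `(N^k, Θ)` is downward directed if every edge `(x, y)`
satisfies `max(x) > max(y)`. -/
def Downward {k : ℕ} (Θ : Set ((Fin k → ℕ) × (Fin k → ℕ))) : Prop :=
  ∀ e ∈ Θ, maxv e.2 < maxv e.1

/-- Two `k`-tuples are order equivalent if they have the same order type:
corresponding coordinates compare the same way. -/
def OrdEquiv {k : ℕ} (x y : Fin k → ℕ) : Prop :=
  ∀ i j : Fin k, (x i < x j ↔ y i < y j) ∧ (x i = x j ↔ y i = y j)

/-- A function with a finite domain `dom ⊆ N^k` (values outside `dom` are irrelevant). -/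
structure FinFn (k : ℕ) where
  dom : Finset (Fin k → ℕ)
  toFun : (Fin k → ℕ) → ℕ

/-- `field(D)`: the set of all coordinates of elements of `D`. -/
def fieldSet {k : ℕ} (D : Finset (Fin k → ℕ)) : Set ℕ :=
  {n | ∃ z ∈ D, ∃ i : Fin k, z i = n}

/-- A family is full if every finite `D ⊆ N^k` is the domain of some member. -/
def FullFam {k : ℕ} (S : Set (FinFn k)) : Prop :=
  ∀ D : Finset (Fin k → ℕ), ∃ f ∈ S, f.dom = D

/-- A family is reflexive if each member takes values in the field of its domain. -/
def ReflexiveFam {k : ℕ} (S : Set (FinFn k)) : Prop :=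
  ∀ f ∈ S, ∀ x ∈ f.dom, f.toFun x ∈ fieldSet f.dom

/-- The jump free condition: if `x ∈ A ∩ B`, `A_x ⊆ B_x`
(`D_x = {z ∈ D : max(z) < max(x)}`), and `f_A = f_B` on `A_x`,
then `f_A(x) ≥ f_B(x)`. -/
def JumpFreeFam {k : ℕ} (S : Set (FinFn k)) : Prop :=
  ∀ fA ∈ S, ∀ fB ∈ S, ∀ x : Fin k → ℕ, x ∈ fA.dom → x ∈ fB.dom →
    (∀ z ∈ fA.dom, maxv z < maxv x → z ∈ fB.dom) →
    (∀ y ∈ fA.dom, maxv y < maxv x → fA.toFun y = fB.toFun y) →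
    fB.toFun x ≤ fA.toFun x

/-- A family is decreasing if whenever `domain(f) ⊆ domain(g)` one has
`f(x) ≥ g(x)` for all `x ∈ domain(f)`. -/
def DecreasingFam {k : ℕ} (S : Set (FinFn k)) : Prop :=
  ∀ f ∈ S, ∀ g ∈ S, f.dom ⊆ g.dom → ∀ x ∈ f.dom, g.toFun x ≤ f.toFun x

/-- `f` is regressively regular over `E`: for each order type of `k`-tuples,
either `f(x) = f(y) < min(E)` for all `x, y ∈ E^k` of that order type, or
`f(x) ≥ min(x)` for all `x ∈ E^k` of that order type. -/
def RegReg {k : ℕ} (f : (Fin k → ℕ) → ℕ) (E : Set ℕ) : Prop :=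
  ∀ x : Fin k → ℕ, (∀ i, x i ∈ E) →
    (∀ y : Fin k → ℕ, (∀ i, y i ∈ E) → OrdEquiv x y → f y = f x ∧ f x < sInf E) ∨
    (∀ y : Fin k → ℕ, (∀ i, y i ∈ E) → OrdEquiv x y → minv y ≤ f y)

/-!
Reading the members of `S` on cubes `A^k` gives functions `φ A : A^k → A` that decrease as `A`
grows. By Ramsey's theorem one may assume that `φ A` depends only on the size of `A`, up to the
order isomorphism `A ≅ Fin n`: there is a *pattern* `F n : (Fin n)^k → Fin n` for each `n`, and
monotonicity becomes `F m (θ ∘ v) ≤ θ (F n v)` for every strictly increasing `θ : Fin n → Fin m`.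
There are finitely many order types, so some `N` is so large that every regressive value of every
pattern is bounded below by a regressive value of `F N` of the same order type. Let `E` consist of
points spaced by gaps of length `N`. If `x, y ∈ E^k` have the same order type and `x` is regressive,
then so is some `w ∈ (Fin N)^k` of this type, with a value at most that of `x`. As the gaps are
large, `w` can be moved onto `y` by a strictly increasing map fixing everything below `w`, in
particular the value of `w`. So the value of `y` is at most that of `x` and lies below `E`, and
by symmetry the two values agree.
-/

open Filter Finset Function

section Ramsey

theorem exists_antitone_seq_infinite {α : Type*} {R : ℕ → Set α → Set α → Prop}
    (hR : ∀ n X, X.Infinite → ∃ Y ⊆ X, Y.Infinite ∧ R n X Y) {X : Set α} (hX : X.Infinite) :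
    ∃ Q : ℕ → Set α, Q 0 = X ∧ Antitone Q ∧ (∀ n, (Q n).Infinite) ∧ ∀ n, R n (Q n) (Q (n + 1)) := by
  choose! next hsub hinf hrel using hR
  let Q : ℕ → Set α := fun n ↦ Nat.rec X next n
  have hQ : ∀ n, (Q n).Infinite := Nat.rec hX fun n ih ↦ hinf n (Q n) ih
  exact ⟨Q, rfl, antitone_nat_of_succ_le fun n ↦ hsub n (Q n) (hQ n), hQ,
    fun n ↦ hrel n (Q n) (hQ n)⟩

theorem ramsey_strictMono {K : Type*} [Finite K] {n : ℕ} (c : (Fin n → ℕ) → K) {X : Set ℕ}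
    (hX : X.Infinite) :
    ∃ Y ⊆ X, Y.Infinite ∧ ∃ κ, ∀ a, StrictMono a → (∀ i, a i ∈ Y) → c a = κ := by
  induction n generalizing X with
  | zero => exact ⟨X, subset_rfl, hX, c Fin.elim0, fun a _ _ ↦ by rw [Subsingleton.elim a]⟩
  | succ n ih =>
    have step (_ : ℕ) (Z : Set ℕ) (hZ : Z.Infinite) : ∃ W ⊆ Z, W.Infinite ∧ ∃ x ∈ Z,
        (∀ y ∈ W, x < y) ∧ ∃ κ, ∀ a, StrictMono a → (∀ i, a i ∈ W) → c (Fin.cons x a) = κ := by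
      obtain ⟨x, hx⟩ := hZ.nonempty
      obtain ⟨W, hWZ, hW, hκ⟩ := ih (fun a ↦ c (Fin.cons x a)) (hZ.sdiff (Set.finite_Iic x))
      exact ⟨W, fun y hy ↦ (hWZ hy).1, hW, x, hx, fun y hy ↦ not_le.mp (hWZ hy).2, hκ⟩
    obtain ⟨Q, rfl, hanti, -, hQ⟩ := exists_antitone_seq_infinite step hX
    choose x hxQ hlt κ hκ using hQ
    have hx_mem {i j : ℕ} (hij : i < j) : x j ∈ Q (i + 1) := hanti hij (hxQ j)
    have hx : StrictMono x := fun i j hij ↦ hlt i _ (hx_mem hij)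
    obtain ⟨κ₀, hκ₀⟩ := Finite.exists_infinite_fiber κ
    refine ⟨x '' (κ ⁻¹' {κ₀}), ?_, (Set.infinite_coe_iff.mp hκ₀).image hx.injective.injOn, κ₀, ?_⟩
    · rintro _ ⟨i, -, rfl⟩
      exact hanti i.zero_le (hxQ i)
    · intro a ha haY
      obtain ⟨i, hi, hxi⟩ := haY 0
      have htail : ∀ j, Fin.tail a j ∈ Q (i + 1) := fun j ↦ by
        obtain ⟨l, -, hl⟩ := haY j.succ
        have hil : i < l := hx.lt_iff_lt.mp (by rw [hxi, hl]; exact ha j.succ_pos)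
        rw [Fin.tail, ← hl]
        exact hx_mem hil
      calc c a = c (Fin.cons (x i) (Fin.tail a)) := by rw [hxi, Fin.cons_self_tail]
        _ = κ i := hκ i _ (ha.comp Fin.strictMono_succ) htail
        _ = κ₀ := hi

theorem exists_strictMono_forall_comp_eq {K : ℕ → Type*} [∀ n, Finite (K n)]
    (c : ∀ n, (Fin n → ℕ) → K n) :
    ∃ κ : ∀ n, K n, ∀ m, ∃ a : Fin m → ℕ, StrictMono a ∧
      ∀ n (θ : Fin n → Fin m), StrictMono θ → c n (a ∘ θ) = κ n := by
  obtain ⟨Q, -, hanti, hinf, hQ⟩ := exists_antitone_seq_infinite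
    (fun n _ hX ↦ ramsey_strictMono (c n) hX) Set.infinite_univ
  choose κ hκ using hQ
  refine ⟨κ, fun m ↦ ?_⟩
  obtain ⟨s, hs, hcard⟩ := (hinf (m + 1)).exists_subset_card_eq m
  have ha := (s.orderEmbOfFin hcard).strictMono
  refine ⟨s.orderEmbOfFin hcard, ha, fun n θ hθ ↦ hκ n _ (ha.comp hθ) fun i ↦ ?_⟩
  have hnm : n ≤ m := by simpa using Fintype.card_le_of_injective θ hθ.injective
  exact hanti (Nat.succ_le_succ hnm) (hs (s.orderEmbOfFin_mem hcard _))

end Ramsey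

section OrderType

variable {k : ℕ} {x y z : Fin k → ℕ}

theorem OrdEquiv.symm (h : OrdEquiv x y) : OrdEquiv y x :=
  fun i j ↦ ⟨(h i j).1.symm, (h i j).2.symm⟩

theorem OrdEquiv.trans (hxy : OrdEquiv x y) (hyz : OrdEquiv y z) : OrdEquiv x z :=
  fun i j ↦ ⟨(hxy i j).1.trans (hyz i j).1, (hxy i j).2.trans (hyz i j).2⟩

theorem ordEquiv_comp_of_strictMono {n : ℕ} {a : Fin n → ℕ} (ha : StrictMono a)
    (v : Fin k → Fin n) : OrdEquiv (a ∘ v) (Fin.val ∘ v) :=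
  fun _ _ ↦ ⟨ha.lt_iff_lt, by simp [ha.injective.eq_iff, Fin.ext_iff]⟩

theorem exists_ordEquiv_fin (x : Fin k → ℕ) : ∃ e : Fin k → Fin k, OrdEquiv x (Fin.val ∘ e) := by
  let below : Fin k → Finset (Fin k) := fun i ↦ {j | x j < x i}
  have hbelow (i : Fin k) : #(below i) < k := by
    simpa using card_lt_univ_of_notMem (s := below i) (x := i) (by simp [below])
  have hlt {i j : Fin k} (hij : x i < x j) : #(below i) < #(below j) := by
    refine card_lt_card ⟨fun l hl ↦ ?_, fun hji ↦ ?_⟩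
    · simp only [below, mem_filter_univ] at hl ⊢
      exact hl.trans hij
    · simpa [below] using hji (x := i) (by simpa [below] using hij)
  have heq {i j : Fin k} (hij : x i = x j) : #(below i) = #(below j) := by simp only [below, hij]
  refine ⟨fun i ↦ ⟨#(below i), hbelow i⟩, fun i j ↦ ?_⟩
  simp only [comp_apply]
  rcases lt_trichotomy (x i) (x j) with h | h | h
  · have := hlt h
    omega
  · have := heq h
    omega
  · have := hlt h
    omega

theorem minv_le (x : Fin k → ℕ) (i : Fin k) : minv x ≤ x i :=
  Nat.sInf_le (Set.mem_range_self i)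

theorem regReg_of_regressive {f : (Fin k → ℕ) → ℕ} {E : Set ℕ}
    (h : ∀ x y, (∀ i, x i ∈ E) → (∀ i, y i ∈ E) → OrdEquiv x y → f x < minv x →
      f y = f x ∧ f x < sInf E) : RegReg f E := by
  intro x hx
  by_cases hreg : ∃ z, (∀ i, z i ∈ E) ∧ OrdEquiv x z ∧ f z < minv z
  · obtain ⟨z, hz, hxz, hfz⟩ := hreg
    obtain ⟨hfx, hlt⟩ := h z x hz hx hxz.symm hfz
    refine .inl fun y hy hxy ↦ ⟨?_, hfx ▸ hlt⟩
    rw [hfx, (h z y hz hy (hxz.symm.trans hxy) hfz).1]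
  · push Not at hreg
    exact .inr hreg

theorem RegReg.ncard_regressive_le {f : (Fin k → ℕ) → ℕ} {E : Set ℕ} (h : RegReg f E) :
    {n : ℕ | ∃ x : Fin k → ℕ, (∀ i, x i ∈ E) ∧ f x = n ∧ n < minv x}.ncard ≤ k ^ k := by
  set T := {n : ℕ | ∃ x : Fin k → ℕ, (∀ i, x i ∈ E) ∧ f x = n ∧ n < minv x}
  choose x hxE hfx hlt using fun n : T ↦ n.2
  choose e he using fun n : T ↦ exists_ordEquiv_fin (x n)
  have he_inj : Injective e := fun n n' hnn' ↦ by
    have hequiv : OrdEquiv (x n) (x n') := (he n).trans (hnn' ▸ (he n').symm)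
    rcases h (x n) (hxE n) with hconst | hge
    · ext
      rw [← hfx n, ← hfx n', (hconst _ (hxE n') hequiv).1]
    · exact absurd (hge _ (hxE n') hequiv) (by simpa [hfx] using hlt n')
  calc T.ncard = Nat.card T := (Nat.card_coe_set_eq T).symm
    _ ≤ Nat.card (Fin k → Fin k) := Nat.card_le_card_of_injective e he_inj
    _ = k ^ k := by simp

theorem strictMono_mul_add_sub {N : ℕ} {block start : Fin N → ℕ} (hstart : ∀ j, start j ≤ j)
    (h : ∀ j j', j < j' → block j < block j' ∨ block j = block j' ∧ start j = start j') :
    StrictMono fun j : Fin N ↦ N * block j + (j - start j) := by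
  intro j j' hjj'
  beta_reduce
  have hj := hstart j
  rcases h j j' hjj' with hlt | ⟨hblock, hstart_eq⟩
  · have := Nat.mul_le_mul_left N (Nat.succ_le_of_lt hlt)
    rw [Nat.mul_succ] at this
    omega
  · simp only [← hblock, ← hstart_eq]
    omega

theorem OrdEquiv.exists_strictMono_extension {N p : ℕ} {w : Fin k → Fin N} {e : Fin k → Fin p}
    (h : OrdEquiv (Fin.val ∘ w) (Fin.val ∘ e)) :
    ∃ θ : Fin N → Fin (N * (p + 1)), StrictMono θ ∧ (∀ i, (θ (w i) : ℕ) = N * (e i + 1)) ∧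
      ∀ j, (∀ i, j < w i) → (θ j : ℕ) = j := by
  have hlt {i i' : Fin k} (hii' : w i < w i') : e i < e i' := (h i i').1.mp hii'
  have hle {i i' : Fin k} (hii' : w i ≤ w i') : e i ≤ e i' :=
    not_lt.mp fun hlt' ↦ hii'.not_gt ((h i' i).1.mpr hlt')
  -- The entries of `w` cut `Fin N` into blocks; each one is translated as a whole.
  let s : Fin N → Finset (Fin k) := fun j ↦ {i | w i ≤ j}
  let start : Fin N → ℕ := fun j ↦ (s j).sup fun i ↦ w i
  let block : Fin N → ℕ := fun j ↦ (s j).sup fun i ↦ e i + 1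
  have hstart_le (j : Fin N) : start j ≤ j := Finset.sup_le fun i hi ↦ by simpa [s] using hi
  have hblock_le (j : Fin N) : block j ≤ p := Finset.sup_le fun i _ ↦ (e i).2
  have hstart_at (i : Fin k) : start (w i) = w i :=
    (hstart_le _).antisymm (le_sup (f := fun i ↦ (w i : ℕ)) (by simp [s]))
  have hblock_at (i : Fin k) : block (w i) = e i + 1 :=
    le_antisymm (Finset.sup_le fun i' hi' ↦ Nat.succ_le_succ (hle (by simpa [s] using hi')))
      (le_sup (f := fun i ↦ (e i + 1 : ℕ)) (by simp [s]))
  have hblock_lt {i : Fin k} {j j' : Fin N} (hj : j < w i) (hj' : w i ≤ j') :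
      block j < block j' := by
    refine Nat.lt_of_lt_of_le (m := e i + 1) (Nat.lt_succ_of_le (Finset.sup_le fun i' hi' ↦ ?_))
      (le_sup (f := fun i ↦ (e i + 1 : ℕ)) (by simpa [s] using hj'))
    exact hlt (lt_of_le_of_lt (by simpa [s] using hi') hj)
  have hθ : StrictMono fun j : Fin N ↦ N * block j + (j - start j) := by
    refine strictMono_mul_add_sub hstart_le fun j j' hjj' ↦ or_iff_not_imp_left.mpr fun hblock ↦ ?_
    have hs : s j = s j' := by
      ext i
      simp only [s, mem_filter_univ]
      exact ⟨fun hi ↦ hi.trans hjj'.le, fun hi ↦ not_lt.mp fun hji ↦ hblock (hblock_lt hji hi)⟩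
    simp only [block, start, hs, and_self]
  refine ⟨fun j ↦ ⟨N * block j + (j - start j), ?_⟩, fun _ _ hjj' ↦ hθ hjj', fun i ↦ ?_,
    fun j hj ↦ ?_⟩
  · have := Nat.mul_le_mul_left N (hblock_le j)
    rw [mul_add_one]
    omega
  · simp [hstart_at, hblock_at]
  · have hs : s j = ∅ := by simpa [s, filter_eq_empty_iff] using hj
    simp [block, start, hs]

end OrderType

section Pattern

variable {k : ℕ}

/-- A sequence of `k`-ary functions, one on each `Fin n`, is decreasing if its values can only drop
when `Fin n` is embedded in a larger `Fin m`. This is the order-invariant counterpart of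
`DecreasingFam`. -/
def DecreasingPatterns (F : ∀ n, (Fin k → Fin n) → Fin n) : Prop :=
  ∀ ⦃n m : ℕ⦄ (θ : Fin n → Fin m), StrictMono θ → ∀ v, F m (θ ∘ v) ≤ θ (F n v)

/-- `f` is the pattern of `φ` at the tuple `a`: it describes the restriction of `φ A` to `A^k`, for
the set `A` of entries of `a`, in terms of positions in `a`. -/
def HasPattern (φ : Finset ℕ → (Fin k → ℕ) → ℕ) {n : ℕ} (a : Fin n → ℕ)
    (f : (Fin k → Fin n) → Fin n) : Prop :=
  ∀ v, φ (univ.image a) (a ∘ v) = a (f v)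

/-- The counterpart of `RegReg` for patterns: over the entries of `b`, a regressive value of `f`
depends only on the order type of its argument and lies below all entries of `b`. -/
def RegularPattern {m p : ℕ} (f : (Fin k → Fin m) → Fin m) (b : Fin p → Fin m) : Prop :=
  ∀ e e' : Fin k → Fin p, OrdEquiv (Fin.val ∘ e) (Fin.val ∘ e') → (∀ i, f (b ∘ e) < b (e i)) →
    f (b ∘ e') = f (b ∘ e) ∧ ∀ j, f (b ∘ e) < b j

theorem exists_decreasingPatterns {φ : Finset ℕ → (Fin k → ℕ) → ℕ}
    (hmem : ∀ A x, (∀ i, x i ∈ A) → φ A x ∈ A)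
    (hanti : ∀ A B x, A ⊆ B → (∀ i, x i ∈ A) → φ B x ≤ φ A x) :
    ∃ F : ∀ n, (Fin k → Fin n) → Fin n, DecreasingPatterns F ∧
      ∀ m, ∃ a : Fin m → ℕ, StrictMono a ∧ HasPattern φ a (F m) := by
  have hex : ∀ n (a : Fin n → ℕ), ∃ f, HasPattern φ a f := fun n a ↦ by
    have hv (v : Fin k → Fin n) : ∃ j, φ (univ.image a) (a ∘ v) = a j := by
      obtain ⟨j, -, hj⟩ := mem_image.mp (hmem (univ.image a) (a ∘ v) (by simp))
      exact ⟨j, hj.symm⟩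
    exact Classical.skolem.mp hv
  choose c hc using hex
  obtain ⟨F, hF⟩ := exists_strictMono_forall_comp_eq c
  refine ⟨F, fun n m θ hθ v ↦ ?_, fun m ↦ ?_⟩
  · obtain ⟨a, ha, hcF⟩ := hF m
    have hm : HasPattern φ a (F m) := hcF m id strictMono_id ▸ hc m a
    have hn : HasPattern φ (a ∘ θ) (F n) := hcF n θ hθ ▸ hc n (a ∘ θ)
    refine ha.le_iff_le.mp ?_
    calc a (F m (θ ∘ v)) = φ (univ.image a) (a ∘ θ ∘ v) := (hm _).symm
      _ ≤ φ (univ.image (a ∘ θ)) (a ∘ θ ∘ v) :=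
        hanti _ _ _ (by simp [image_subset_iff]) (by simp)
      _ = a (θ (F n v)) := hn v
  · obtain ⟨a, ha, hcF⟩ := hF m
    exact ⟨a, ha, hcF m id strictMono_id ▸ hc m a⟩

theorem DecreasingPatterns.eventually_exists_le {F : ∀ n, (Fin k → Fin n) → Fin n}
    (hF : DecreasingPatterns F) :
    ∀ᶠ N in atTop, ∀ n (v : Fin k → Fin n), (∀ i, F n v < v i) →
      ∃ w : Fin k → Fin N, OrdEquiv (Fin.val ∘ v) (Fin.val ∘ w) ∧ (∀ i, F N w < w i) ∧
        (F N w : ℕ) ≤ F n v := by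
  suffices h : ∀ e : Fin k → Fin k, ∀ᶠ N in atTop, ∀ n (v : Fin k → Fin n),
      OrdEquiv (Fin.val ∘ v) (Fin.val ∘ e) → (∀ i, F n v < v i) →
      ∃ w : Fin k → Fin N, OrdEquiv (Fin.val ∘ w) (Fin.val ∘ e) ∧ (∀ i, F N w < w i) ∧
        (F N w : ℕ) ≤ F n v by
    filter_upwards [eventually_all.mpr h] with N hN n v hv
    obtain ⟨e, he⟩ := exists_ordEquiv_fin (Fin.val ∘ v)
    obtain ⟨w, hw, hlt, hle⟩ := hN e n v he hv
    exact ⟨w, he.trans hw.symm, hlt, hle⟩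
  intro e
  let IsWitness (t : Σ n, Fin k → Fin n) : Prop :=
    OrdEquiv (Fin.val ∘ t.2) (Fin.val ∘ e) ∧ ∀ i, F t.1 t.2 < t.2 i
  by_cases hex : ∃ t, IsWitness t
  · obtain ⟨⟨n₀, v₀⟩, ⟨he, hlt⟩, hmin⟩ :=
      exists_minimalFor_of_wellFoundedLT IsWitness (fun t ↦ (F t.1 t.2 : ℕ)) hex
    filter_upwards [eventually_ge_atTop n₀] with N hN n v hve hv
    have hdrop : F N (Fin.castLE hN ∘ v₀) ≤ Fin.castLE hN (F n₀ v₀) :=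
      hF _ (Fin.strictMono_castLE hN) v₀
    refine ⟨Fin.castLE hN ∘ v₀, he, fun i ↦ hdrop.trans_lt (hlt i), ?_⟩
    calc (F N (Fin.castLE hN ∘ v₀) : ℕ) ≤ F n₀ v₀ := hdrop
      _ ≤ F n v := (le_total _ _).elim id (hmin (j := ⟨n, v⟩) ⟨hve, hv⟩)
  · exact .of_forall fun N n v hve hv ↦ absurd ⟨⟨n, v⟩, hve, hv⟩ hex

theorem DecreasingPatterns.exists_regularPattern {F : ∀ n, (Fin k → Fin n) → Fin n}
    (hF : DecreasingPatterns F) (p : ℕ) :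
    ∃ m, ∃ b : Fin p → Fin m, StrictMono b ∧ RegularPattern (F m) b := by
  obtain ⟨N, hN, hN_pos⟩ := (hF.eventually_exists_le.and (eventually_gt_atTop 0)).exists
  let b : Fin p → Fin (N * (p + 1)) := fun t ↦
    ⟨N * (t + 1), Nat.mul_lt_mul_of_pos_left (Nat.succ_lt_succ t.2) hN_pos⟩
  have hb : StrictMono b := fun s t hst ↦
    Nat.mul_lt_mul_of_pos_left (Nat.succ_lt_succ hst) hN_pos
  have hN_le (t : Fin p) : N ≤ b t := Nat.le_mul_of_pos_right N (Nat.succ_pos t)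
  have key {e e' : Fin k → Fin p} (hee' : OrdEquiv (Fin.val ∘ e) (Fin.val ∘ e'))
      (hlt : ∀ i, F _ (b ∘ e) < b (e i)) :
      F _ (b ∘ e') ≤ F _ (b ∘ e) ∧ (F _ (b ∘ e') : ℕ) < N := by
    obtain ⟨w, hw, hw_lt, hw_le⟩ := hN _ (b ∘ e) hlt
    have hwe' : OrdEquiv (Fin.val ∘ w) (Fin.val ∘ e') :=
      hw.symm.trans ((ordEquiv_comp_of_strictMono (Fin.val_strictMono.comp hb) e).trans hee')
    obtain ⟨θ, hθ, hθw, hθ_fix⟩ := hwe'.exists_strictMono_extension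
    have hθw : θ ∘ w = b ∘ e' := funext fun i ↦ Fin.ext (hθw i)
    have hle : (F _ (b ∘ e') : ℕ) ≤ F N w := by
      rw [← hθ_fix _ hw_lt, ← hθw]
      exact hF θ hθ w
    exact ⟨hle.trans hw_le, hle.trans_lt (F N w).2⟩
  refine ⟨_, b, hb, fun e e' hee' hlt ↦ ?_⟩
  obtain ⟨hle, hlt'⟩ := key hee' hlt
  obtain ⟨hge, hlt_N⟩ := key hee'.symm fun i ↦ hlt'.trans_le (hN_le _)
  exact ⟨le_antisymm hle hge, fun j ↦ hlt_N.trans_le (hN_le j)⟩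

theorem HasPattern.regReg {φ : Finset ℕ → (Fin k → ℕ) → ℕ} {m p : ℕ} {a : Fin m → ℕ}
    {f : (Fin k → Fin m) → Fin m} {b : Fin p → Fin m} (hf : HasPattern φ a f) (ha : StrictMono a)
    (hb : StrictMono b) (hreg : RegularPattern f b) :
    RegReg (φ (univ.image a)) (univ.image (a ∘ b) : Finset ℕ) := by
  refine regReg_of_regressive fun x y hx hy hxy hlt ↦ ?_
  have hexists {z : Fin k → ℕ} (hz : ∀ i, z i ∈ (univ.image (a ∘ b) : Finset ℕ)) :
      ∃ e : Fin k → Fin p, a ∘ b ∘ e = z := by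
    choose e he using fun i ↦ mem_image.mp (hz i)
    exact ⟨e, funext fun i ↦ (he i).2⟩
  obtain ⟨e, rfl⟩ := hexists hx
  obtain ⟨e', rfl⟩ := hexists hy
  have hee' : OrdEquiv (Fin.val ∘ e) (Fin.val ∘ e') :=
    (ordEquiv_comp_of_strictMono (ha.comp hb) e).symm.trans
      (hxy.trans (ordEquiv_comp_of_strictMono (ha.comp hb) e'))
  simp only [hf _] at hlt ⊢
  obtain ⟨heq, hbelow⟩ := hreg e e' hee' fun i ↦ ha.lt_iff_lt.mp (hlt.trans_le (minv_le _ i))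
  obtain ⟨_, i, -⟩ := Nat.nonempty_of_pos_sInf (Nat.zero_lt_of_lt hlt)
  obtain ⟨j, -, hj⟩ := mem_image.mp (Nat.sInf_mem ⟨_, hx i⟩)
  exact ⟨by rw [heq], hj ▸ ha (hbelow j)⟩

end Pattern

/-- Decreasing class theorem: for `k, p ≥ 2` and a full,
decreasing family `S ⊆ T(k)` of reflexive functions, there are `E ⊆ A ⊆ N`
with `|E| = p` and `f ∈ S` with domain `A^k` such that `f` is regressively
regular over `E`; in particular, `f` has at most `k^k` regressive values
on `E^k`. -/
theorem stmt2 (k p : ℕ) (hk : 2 ≤ k) (hp : 2 ≤ p) (S : Set (FinFn k))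
    (hrefl : ReflexiveFam S) (hfull : FullFam S) (hdec : DecreasingFam S) :
    ∃ (E A : Finset ℕ) (f : FinFn k), f ∈ S ∧ E ⊆ A ∧ E.card = p ∧
      f.dom = Fintype.piFinset (fun _ : Fin k => A) ∧
      RegReg f.toFun (E : Set ℕ) ∧
      {n : ℕ | ∃ x : Fin k → ℕ, (∀ i, x i ∈ E) ∧ f.toFun x = n ∧
        n < minv x}.ncard ≤ k ^ k := by
  choose f hfS hfdom using hfull
  have hmem (A : Finset ℕ) (x : Fin k → ℕ) : x ∈ (f (Fintype.piFinset fun _ ↦ A)).dom ↔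
      ∀ i, x i ∈ A := by rw [hfdom, Fintype.mem_piFinset]
  obtain ⟨F, hF, hpattern⟩ := exists_decreasingPatterns
    (φ := fun A ↦ (f (Fintype.piFinset fun _ ↦ A)).toFun)
    (fun A x hx ↦ by
      obtain ⟨z, hz, i, hi⟩ := hrefl _ (hfS _) x ((hmem A x).mpr hx)
      exact hi ▸ (hmem A z).mp hz i)
    (fun A B x hAB hx ↦ hdec _ (hfS _) _ (hfS _)
      (fun z hz ↦ (hmem B z).mpr fun i ↦ hAB ((hmem A z).mp hz i)) x ((hmem A x).mpr hx))
  obtain ⟨m, b, hb, hreg⟩ := hF.exists_regularPattern p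
  obtain ⟨a, ha, hφa⟩ := hpattern m
  have hRegReg := hφa.regReg ha hb hreg
  refine ⟨univ.image (a ∘ b), univ.image a, _, hfS _, by simp [image_subset_iff], ?_, hfdom _,
    hRegReg, hRegReg.ncard_regressive_le⟩
  rw [card_image_of_injective _ (ha.comp hb).injective, card_univ, Fintype.card_fin]
end

section
/- Let k ≥ 2 and let G = (N^k, Θ) be a downward directed graph. The family S = {t̂_D : D ⊆ N^k, D finite} of terminal path label functions is full, reflexive, and jump free. -/
open scoped Classical

/-- `(a, b)` is an edge of the induced subgraph `G_D`. -/
def EdgeD {k : ℕ} (Θ : Set ((Fin k → ℕ) × (Fin k → ℕ))) (D : Set (Fin k → ℕ))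
    (a b : Fin k → ℕ) : Prop :=
  a ∈ D ∧ b ∈ D ∧ (a, b) ∈ Θ

/-- A path in `G_D`: a nonempty sequence of distinct vertices of `D` with
consecutive pairs being edges. -/
def IsPathD {k : ℕ} (Θ : Set ((Fin k → ℕ) × (Fin k → ℕ))) (D : Set (Fin k → ℕ))
    (l : List (Fin k → ℕ)) : Prop :=
  l ≠ [] ∧ l.Nodup ∧ (∀ x ∈ l, x ∈ D) ∧ l.Chain' (fun a b => (a, b) ∈ Θ)

/-- There is a path in `G_D` from `z` to `x` (possibly the trivial path `(z)`). -/
def PathFrom {k : ℕ} (Θ : Set ((Fin k → ℕ) × (Fin k → ℕ))) (D : Set (Fin k → ℕ))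
    (z x : Fin k → ℕ) : Prop :=
  ∃ l : List (Fin k → ℕ), IsPathD Θ D l ∧ l.head? = some z ∧ l.getLast? = some x

/-- `z` is a terminal vertex of `G_D`: it has no out-neighbor in `G_D`. -/
def TerminalV {k : ℕ} (Θ : Set ((Fin k → ℕ) × (Fin k → ℕ))) (D : Set (Fin k → ℕ))
    (z : Fin k → ℕ) : Prop :=
  ∀ y, ¬ EdgeD Θ D z y

/-- `P_D(z)`: the set of vertices reachable from `z` by a path in `G_D`. -/
def PD {k : ℕ} (Θ : Set ((Fin k → ℕ) × (Fin k → ℕ))) (D : Set (Fin k → ℕ))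
    (z : Fin k → ℕ) : Set (Fin k → ℕ) :=
  {x | PathFrom Θ D z x}

/-- The total path label `p_D(z) = min { min(x) : x ∈ P_D(z) }`. -/
noncomputable def pD {k : ℕ} (Θ : Set ((Fin k → ℕ) × (Fin k → ℕ))) (D : Set (Fin k → ℕ))
    (z : Fin k → ℕ) : ℕ :=
  sInf {n | ∃ x ∈ PD Θ D z, minv x = n}

/-- `p̂_D(z) = max(z)` if `z` is terminal in `G_D`, else `p̂_D(z) = p_D(z)`. -/
noncomputable def phatD {k : ℕ} (Θ : Set ((Fin k → ℕ) × (Fin k → ℕ))) (D : Set (Fin k → ℕ))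
    (z : Fin k → ℕ) : ℕ :=
  if TerminalV Θ D z then maxv z else pD Θ D z

/-- A terminal path of `G_D`: a path that cannot be extended. -/
def IsTermPathD {k : ℕ} (Θ : Set ((Fin k → ℕ) × (Fin k → ℕ))) (D : Set (Fin k → ℕ))
    (l : List (Fin k → ℕ)) : Prop :=
  IsPathD Θ D l ∧ ∀ x, ¬ IsPathD Θ D (l ++ [x])

/-- `T_D(z)`: the set of last vertices of terminal paths of `G_D` starting at `z`. -/
def TD {k : ℕ} (Θ : Set ((Fin k → ℕ) × (Fin k → ℕ))) (D : Set (Fin k → ℕ))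
    (z : Fin k → ℕ) : Set (Fin k → ℕ) :=
  {x | ∃ l : List (Fin k → ℕ), IsTermPathD Θ D l ∧ l.head? = some z ∧ l.getLast? = some x}

/-- The terminal path label function `t̂_D`:
`t̂_D(z) = max(z)` if `z` is terminal, else `t̂_D(z) = min { min(x) : x ∈ T_D(z) }`. -/
noncomputable def tD {k : ℕ} (Θ : Set ((Fin k → ℕ) × (Fin k → ℕ))) (D : Set (Fin k → ℕ))
    (z : Fin k → ℕ) : ℕ :=
  if TerminalV Θ D z then maxv z else sInf {n | ∃ x ∈ TD Θ D z, minv x = n}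

/-- The family `S = {t̂_D : D ⊆ N^k, D finite}` of terminal path label
functions, as functions with finite domains. -/
def tFam {k : ℕ} (Θ : Set ((Fin k → ℕ) × (Fin k → ℕ))) : Set (FinFn k) :=
  {f | ∃ D : Finset (Fin k → ℕ), f.dom = D ∧ f.toFun = fun z => tD Θ (↑D) z}

/-!
Along the edges of a downward directed graph `max` strictly decreases. Hence a walk in `G_D` is
automatically a path, every vertex reaches a terminal vertex, and everything reachable from `x` in
one or more steps lies in `D_x`. Since `min ≤ max`, it also follows that `t̂_D(z) ≤ max(z)`, with
equality exactly when `z` is terminal: the label recognises the terminal vertices.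

For jump freeness, let `x` be nonterminal in `G_A`, with label `min(y)` for a terminal `y ∈ A_x` of
`G_A`. Paths from `x` in `G_A` survive in `G_B` because `A_x ⊆ B_x`, and
`t̂_B(y) = t̂_A(y) = max(y)` shows that `y` is terminal in `G_B` too, so `t̂_B(x) ≤ min(y)`.
-/

open Relation

section Coordinates

variable {k : ℕ} [NeZero k] (z : Fin k → ℕ)

theorem exists_apply_eq_maxv : ∃ i, z i = maxv z := by
  obtain ⟨i, -, hi⟩ := Finset.exists_mem_eq_sup Finset.univ Finset.univ_nonempty z
  exact ⟨i, hi.symm⟩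

theorem exists_apply_eq_minv : ∃ i, z i = minv z :=
  Nat.sInf_mem (Set.range_nonempty z)

theorem minv_le_maxv : minv z ≤ maxv z := by
  obtain ⟨i, hi⟩ := exists_apply_eq_minv z
  exact hi ▸ Finset.le_sup (Finset.mem_univ i)

variable {z} {D : Finset (Fin k → ℕ)}

theorem maxv_mem_fieldSet (hz : z ∈ D) : maxv z ∈ fieldSet D :=
  ⟨z, hz, exists_apply_eq_maxv z⟩

theorem minv_mem_fieldSet (hz : z ∈ D) : minv z ∈ fieldSet D :=
  ⟨z, hz, exists_apply_eq_minv z⟩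

end Coordinates

section Reachability

variable {k : ℕ} {Θ : Set ((Fin k → ℕ) × (Fin k → ℕ))} {A B D : Set (Fin k → ℕ)}
  {x y z : Fin k → ℕ}

theorem mem_of_transGen_edgeD (h : TransGen (EdgeD Θ D) z x) : x ∈ D := by
  obtain ⟨y, -, hyx⟩ := TransGen.tail'_iff.1 h
  exact hyx.2.1

theorem not_terminalV_iff : ¬ TerminalV Θ D z ↔ ∃ y, EdgeD Θ D z y := by
  simp only [TerminalV, not_forall, not_not]

theorem not_terminalV_of_transGen (h : TransGen (EdgeD Θ D) z x) : ¬ TerminalV Θ D z := by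
  obtain ⟨y, hzy, -⟩ := TransGen.head'_iff.1 h
  exact not_terminalV_iff.2 ⟨y, hzy⟩

theorem maxv_lt_of_edgeD (hΘ : Downward Θ) (h : EdgeD Θ D z x) : maxv x < maxv z :=
  hΘ _ h.2.2

theorem maxv_lt_of_transGen (hΘ : Downward Θ) (h : TransGen (EdgeD Θ D) z x) :
    maxv x < maxv z := by
  induction h with
  | single hzx => exact maxv_lt_of_edgeD hΘ hzx
  | tail _ hyx ih => exact (maxv_lt_of_edgeD hΘ hyx).trans ih

theorem exists_reflTransGen_terminalV (hΘ : Downward Θ) (D : Set (Fin k → ℕ))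
    (z : Fin k → ℕ) : ∃ x, ReflTransGen (EdgeD Θ D) z x ∧ TerminalV Θ D x := by
  obtain ⟨x, hzx, hmin⟩ := (measure maxv).wf.has_min {x | ReflTransGen (EdgeD Θ D) z x} ⟨z, .refl⟩
  exact ⟨x, hzx, fun y hxy ↦ hmin y (hzx.tail hxy) (maxv_lt_of_edgeD hΘ hxy)⟩

theorem exists_transGen_terminalV (hΘ : Downward Θ) (hz : ¬ TerminalV Θ D z) :
    ∃ x, TransGen (EdgeD Θ D) z x ∧ TerminalV Θ D x := by
  obtain ⟨y, hzy⟩ := not_terminalV_iff.1 hz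
  obtain ⟨x, hyx, hx⟩ := exists_reflTransGen_terminalV hΘ D y
  exact ⟨x, .head' hzy hyx, hx⟩

theorem transGen_edgeD_of_below_subset (hΘ : Downward Θ) (hxB : x ∈ B)
    (hAB : ∀ y ∈ A, maxv y < maxv x → y ∈ B) (h : TransGen (EdgeD Θ A) x y) :
    TransGen (EdgeD Θ B) x y := by
  induction h with
  | single hxy => exact .single ⟨hxB, hAB _ hxy.2.1 (maxv_lt_of_edgeD hΘ hxy), hxy.2.2⟩
  | @tail b c hxb hbc ih =>
    have hcB : c ∈ B := hAB c hbc.2.1 (maxv_lt_of_transGen hΘ (hxb.tail hbc))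
    exact ih.tail ⟨mem_of_transGen_edgeD ih, hcB, hbc.2.2⟩

end Reachability

section Paths

variable {k : ℕ} {Θ : Set ((Fin k → ℕ) × (Fin k → ℕ))} {D : Set (Fin k → ℕ)}
  {x y z : Fin k → ℕ} {l : List (Fin k → ℕ)}

theorem nodup_of_isChain_edgeD (hΘ : Downward Θ) (h : l.IsChain (EdgeD Θ D)) : l.Nodup := by
  have hdecr : (l.map maxv).IsChain (· > ·) :=
    (List.isChain_map maxv).2 (h.imp fun _ _ ↦ maxv_lt_of_edgeD hΘ)
  exact .of_map maxv hdecr.pairwise.nodup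

theorem isPathD_cons_iff (hΘ : Downward Θ) :
    IsPathD Θ D (z :: l) ↔ z ∈ D ∧ (z :: l).IsChain (EdgeD Θ D) := by
  constructor
  · rintro ⟨-, -, hD, hchain⟩
    exact ⟨hD z List.mem_cons_self,
      List.IsChain.imp_of_mem_imp (fun a b ha hb hab ↦ ⟨hD a ha, hD b hb, hab⟩) hchain⟩
  · rintro ⟨hz, hchain⟩
    exact ⟨List.cons_ne_nil z l, nodup_of_isChain_edgeD hΘ hchain,
      hchain.induction (· ∈ D) _ (fun _ _ hab _ ↦ hab.2.1) fun _ ↦ hz,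
      hchain.imp fun _ _ hab ↦ hab.2.2⟩

theorem isPathD_concat_iff (hΘ : Downward Θ) (hx : l.getLast? = some x) :
    IsPathD Θ D (l ++ [y]) ↔ IsPathD Θ D l ∧ EdgeD Θ D x y := by
  cases l with
  | nil => simp at hx
  | cons z l =>
    rw [List.cons_append, isPathD_cons_iff hΘ, isPathD_cons_iff hΘ, ← List.cons_append,
      List.isChain_append]
    simp [hx, and_assoc]

theorem isTermPathD_iff (hΘ : Downward Θ) (hx : l.getLast? = some x) :
    IsTermPathD Θ D l ↔ IsPathD Θ D l ∧ TerminalV Θ D x :=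
  and_congr_right fun hl ↦ forall_congr' fun _ ↦
    not_congr ((isPathD_concat_iff hΘ hx).trans (and_iff_right hl))

theorem pathFrom_iff (hΘ : Downward Θ) :
    PathFrom Θ D z x ↔ z ∈ D ∧ ReflTransGen (EdgeD Θ D) z x := by
  constructor
  · rintro ⟨l, hl, hz, hx⟩
    obtain ⟨l, rfl⟩ := List.head?_eq_some_iff.1 hz
    obtain ⟨hzD, hchain⟩ := (isPathD_cons_iff hΘ).1 hl
    exact ⟨hzD, List.relationReflTransGen_of_exists_isChain_cons l hchain
      (List.getLast_of_getLast?_eq_some hx)⟩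
  · rintro ⟨hzD, hzx⟩
    obtain ⟨l, hchain, hx⟩ := List.exists_isChain_cons_of_relationReflTransGen hzx
    exact ⟨z :: l, (isPathD_cons_iff hΘ).2 ⟨hzD, hchain⟩, rfl,
      hx ▸ List.getLast?_eq_some_getLast (List.cons_ne_nil z l)⟩

theorem mem_TD_iff (hΘ : Downward Θ) :
    x ∈ TD Θ D z ↔ PathFrom Θ D z x ∧ TerminalV Θ D x := by
  constructor
  · rintro ⟨l, hl, hz, hx⟩
    obtain ⟨hpath, hterm⟩ := (isTermPathD_iff hΘ hx).1 hl
    exact ⟨⟨l, hpath, hz, hx⟩, hterm⟩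
  · rintro ⟨⟨l, hpath, hz, hx⟩, hterm⟩
    exact ⟨l, (isTermPathD_iff hΘ hx).2 ⟨hpath, hterm⟩, hz, hx⟩

theorem mem_TD_iff_of_not_terminalV (hΘ : Downward Θ) (hz : ¬ TerminalV Θ D z) :
    x ∈ TD Θ D z ↔ TransGen (EdgeD Θ D) z x ∧ TerminalV Θ D x := by
  obtain ⟨y, hzy⟩ := not_terminalV_iff.1 hz
  rw [mem_TD_iff hΘ, pathFrom_iff hΘ, and_iff_right hzy.1, reflTransGen_iff_eq_or_transGen]
  refine and_congr_left fun hx ↦ or_iff_right ?_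
  rintro rfl
  exact hz hx

end Paths

section Labels

variable {k : ℕ} {Θ : Set ((Fin k → ℕ) × (Fin k → ℕ))} {A B D : Set (Fin k → ℕ)}
  {x z : Fin k → ℕ}

theorem tD_of_terminalV (hz : TerminalV Θ D z) : tD Θ D z = maxv z :=
  if_pos hz

theorem isLeast_tD (hΘ : Downward Θ) (hz : ¬ TerminalV Θ D z) :
    IsLeast (minv '' {x | TransGen (EdgeD Θ D) z x ∧ TerminalV Θ D x}) (tD Θ D z) := by
  have hTD : TD Θ D z = {x | TransGen (EdgeD Θ D) z x ∧ TerminalV Θ D x} :=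
    Set.ext fun _ ↦ mem_TD_iff_of_not_terminalV hΘ hz
  have htD : tD Θ D z = sInf (minv '' TD Θ D z) := if_neg hz
  rw [htD, hTD]
  have hne := Set.Nonempty.image minv (exists_transGen_terminalV hΘ hz)
  exact ⟨Nat.sInf_mem hne, fun _ ↦ Nat.sInf_le⟩

theorem tD_le_minv (hΘ : Downward Θ) (hzx : TransGen (EdgeD Θ D) z x)
    (hx : TerminalV Θ D x) : tD Θ D z ≤ minv x :=
  (isLeast_tD hΘ (not_terminalV_of_transGen hzx)).2 ⟨x, ⟨hzx, hx⟩, rfl⟩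

theorem exists_tD_eq_minv (hΘ : Downward Θ) (hz : ¬ TerminalV Θ D z) :
    ∃ x, TransGen (EdgeD Θ D) z x ∧ TerminalV Θ D x ∧ tD Θ D z = minv x := by
  obtain ⟨x, ⟨hzx, hx⟩, hmin⟩ := (isLeast_tD hΘ hz).1
  exact ⟨x, hzx, hx, hmin.symm⟩

variable [NeZero k]

theorem tD_lt_maxv (hΘ : Downward Θ) (hz : ¬ TerminalV Θ D z) : tD Θ D z < maxv z := by
  obtain ⟨x, hzx, -, htD⟩ := exists_tD_eq_minv hΘ hz
  calc
    tD Θ D z = minv x := htD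
    _ ≤ maxv x := minv_le_maxv x
    _ < maxv z := maxv_lt_of_transGen hΘ hzx

theorem terminalV_iff_maxv_le_tD (hΘ : Downward Θ) :
    TerminalV Θ D z ↔ maxv z ≤ tD Θ D z :=
  ⟨fun hz ↦ (tD_of_terminalV hz).ge, fun h ↦ by_contra fun hz ↦ (tD_lt_maxv hΘ hz).not_ge h⟩

theorem tD_le_maxv (hΘ : Downward Θ) : tD Θ D z ≤ maxv z := by
  by_cases hz : TerminalV Θ D z
  · exact (tD_of_terminalV hz).le
  · exact (tD_lt_maxv hΘ hz).le

theorem tD_mem_fieldSet (hΘ : Downward Θ) {D : Finset (Fin k → ℕ)} (hz : z ∈ D) :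
    tD Θ D z ∈ fieldSet D := by
  by_cases hterm : TerminalV Θ D z
  · exact tD_of_terminalV hterm ▸ maxv_mem_fieldSet hz
  · obtain ⟨x, hzx, -, htD⟩ := exists_tD_eq_minv hΘ hterm
    exact htD ▸ minv_mem_fieldSet (mem_of_transGen_edgeD hzx)

theorem tD_le_tD_of_below_subset (hΘ : Downward Θ) (hxB : x ∈ B)
    (hAB : ∀ y ∈ A, maxv y < maxv x → y ∈ B)
    (hle : ∀ y ∈ A, maxv y < maxv x → tD Θ A y ≤ tD Θ B y) :
    tD Θ B x ≤ tD Θ A x := by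
  by_cases hx : TerminalV Θ A x
  · exact (tD_le_maxv hΘ).trans ((terminalV_iff_maxv_le_tD hΘ).1 hx)
  · obtain ⟨y, hxy, hyA, htD⟩ := exists_tD_eq_minv hΘ hx
    have hle_y : tD Θ A y ≤ tD Θ B y :=
      hle y (mem_of_transGen_edgeD hxy) (maxv_lt_of_transGen hΘ hxy)
    have hyB : TerminalV Θ B y :=
      (terminalV_iff_maxv_le_tD hΘ).2 (((terminalV_iff_maxv_le_tD hΘ).1 hyA).trans hle_y)
    exact htD ▸ tD_le_minv hΘ (transGen_edgeD_of_below_subset hΘ hxB hAB hxy) hyB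

end Labels

section Families

variable {k : ℕ} {Θ : Set ((Fin k → ℕ) × (Fin k → ℕ))}

theorem tFam_eq_range (Θ : Set ((Fin k → ℕ) × (Fin k → ℕ))) :
    tFam Θ = Set.range fun D : Finset (Fin k → ℕ) ↦ ⟨D, tD Θ D⟩ := by
  ext f
  constructor
  · rintro ⟨D, hdom, hval⟩
    cases f
    exact ⟨D, (FinFn.mk.injEq ..).mpr ⟨hdom.symm, hval.symm⟩⟩
  · rintro ⟨D, rfl⟩
    exact ⟨D, rfl, rfl⟩

theorem fullFam_tFam (Θ : Set ((Fin k → ℕ) × (Fin k → ℕ))) : FullFam (tFam Θ) :=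
  fun D ↦ ⟨⟨D, tD Θ D⟩, tFam_eq_range Θ ▸ ⟨D, rfl⟩, rfl⟩

variable [NeZero k]

theorem reflexiveFam_tFam (hΘ : Downward Θ) : ReflexiveFam (tFam Θ) := by
  rw [tFam_eq_range]
  rintro _ ⟨D, rfl⟩ x hx
  exact tD_mem_fieldSet hΘ hx

theorem jumpFreeFam_tFam (hΘ : Downward Θ) : JumpFreeFam (tFam Θ) := by
  rw [tFam_eq_range]
  rintro _ ⟨A, rfl⟩ _ ⟨B, rfl⟩ x - hxB hAB heq
  exact tD_le_tD_of_below_subset hΘ hxB hAB fun y hyA hyx ↦ (heq y hyA hyx).le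

end Families

theorem stmt3_general {k : ℕ} [NeZero k] {Θ : Set ((Fin k → ℕ) × (Fin k → ℕ))}
    (hΘ : Downward Θ) :
    FullFam (tFam Θ) ∧ ReflexiveFam (tFam Θ) ∧ JumpFreeFam (tFam Θ) :=
  ⟨fullFam_tFam Θ, reflexiveFam_tFam hΘ, jumpFreeFam_tFam hΘ⟩

/-- for `k ≥ 2` and a downward directed graph `G = (N^k, Θ)`,
the family `S = {t̂_D : D ⊆ N^k, D finite}` is full, reflexive and jump free. -/
theorem stmt3 (k : ℕ) (hk : 2 ≤ k) (Θ : Set ((Fin k → ℕ) × (Fin k → ℕ)))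
    (hΘ : Downward Θ) :
    FullFam (tFam Θ) ∧ ReflexiveFam (tFam Θ) ∧ JumpFreeFam (tFam Θ) := by
  have : NeZero k := ⟨by lia⟩
  exact stmt3_general hΘ
end
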